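/- Theorem 3.1 (lower blow-up rate): Let λ₁ = λ₂ = λ > 0 and let (u,v) be a classical solution of problem (1.1) that blows up at time T < ∞. Assume in addition that the initial data satisfy u₀'(r) − (r/R)e^{v₀(r)} ≥ 0 and v₀'(r) − (r/R)e^{u₀(r)} ≥ 0 for all r ∈ [0,R]. Then there exists a constant c > 0 such that for all t ∈ (0,T): u(R,t) ≥ log c − (1/2) log(T−t) and v(R,t) ≥ log c − (1/2) log(T−t); equivalently e^{u(R,t)} ≥ c (T−t)^{−1/2} and e^{v(R,t)} ≥ c (T−t)^{−1/2}. -/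

import Mathlib

/-!
If `u` and `v` are at most `M` at time `t`, then the barrier `M + G (s - t)` plus a boundary layer
with flux of order `exp M` keeps both below `M + 2` for a time of order `exp (-2 * M)`.  Hence the
maximum `M` of the solution at a time `t` before blow-up satisfies `exp (2 * M) ≳ 1 / (T - t)`.

The boundary values of both components are comparable to this maximum.  Comparing over all pairs of
points with `‖x‖ ≤ ‖y‖`, rather than at a single point, shows that radial monotonicity is preserved,
so that each component is largest on the sphere.  The same comparison bounds `u - v`: where `u`
exceeds `v` by a large constant, `u` has the weaker source and the weaker flux.
-/

open Set Real Metric MeasureTheory Filter Topology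

/-- The Euclidean Laplacian of `f : ℝⁿ → ℝ` at `x`, computed as the sum of second
directional derivatives along the coordinate directions. -/
noncomputable def lap {n : ℕ} (f : EuclideanSpace ℝ (Fin n) → ℝ)
    (x : EuclideanSpace ℝ (Fin n)) : ℝ :=
  ∑ i : Fin n, iteratedDeriv 2 (fun s : ℝ => f (x + s • EuclideanSpace.single i (1 : ℝ))) 0

/-- The outward normal derivative `∇f · (x/R)` on the sphere of radius `R`. -/
noncomputable def normalDeriv {n : ℕ} (R : ℝ) (f : EuclideanSpace ℝ (Fin n) → ℝ)
    (x : EuclideanSpace ℝ (Fin n)) : ℝ :=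
  deriv (fun s : ℝ => f (x + s • (R⁻¹ • x))) 0

/-- Admissible initial data for problem (1.1): nonnegative, smooth, radial with
nondecreasing radial profiles, and satisfying the compatibility conditions. -/
structure AdmissibleData (n : ℕ) (R : ℝ)
    (u₀ v₀ : EuclideanSpace ℝ (Fin n) → ℝ) : Prop where
  u0_nonneg : ∀ x ∈ closedBall (0 : EuclideanSpace ℝ (Fin n)) R, 0 ≤ u₀ x
  v0_nonneg : ∀ x ∈ closedBall (0 : EuclideanSpace ℝ (Fin n)) R, 0 ≤ v₀ x
  u0_smooth : ContDiffOn ℝ (⊤ : ℕ∞) u₀ (closedBall (0 : EuclideanSpace ℝ (Fin n)) R)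
  v0_smooth : ContDiffOn ℝ (⊤ : ℕ∞) v₀ (closedBall (0 : EuclideanSpace ℝ (Fin n)) R)
  u0_radial_mono : ∀ x ∈ closedBall (0 : EuclideanSpace ℝ (Fin n)) R,
    ∀ y ∈ closedBall (0 : EuclideanSpace ℝ (Fin n)) R, ‖x‖ ≤ ‖y‖ → u₀ x ≤ u₀ y
  v0_radial_mono : ∀ x ∈ closedBall (0 : EuclideanSpace ℝ (Fin n)) R,
    ∀ y ∈ closedBall (0 : EuclideanSpace ℝ (Fin n)) R, ‖x‖ ≤ ‖y‖ → v₀ x ≤ v₀ y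
  compat_u : ∀ x : EuclideanSpace ℝ (Fin n), ‖x‖ = R → normalDeriv R u₀ x = Real.exp (v₀ x)
  compat_v : ∀ x : EuclideanSpace ℝ (Fin n), ‖x‖ = R → normalDeriv R v₀ x = Real.exp (u₀ x)
  compat_u' : ∀ x ∈ closedBall (0 : EuclideanSpace ℝ (Fin n)) R, 0 ≤ lap u₀ x + Real.exp (v₀ x)
  compat_v' : ∀ x ∈ closedBall (0 : EuclideanSpace ℝ (Fin n)) R, 0 ≤ lap v₀ x + Real.exp (u₀ x)

/-- A classical solution of problem (1.1) on `[0,T)` on the ball of radius `R`: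
continuous on `cl(B_R) × [0,T)`, of class C²,¹ on `cl(B_R) × (0,T)`, satisfying the
equations `u_t = Δu + λ₁ e^v`, `v_t = Δv + λ₂ e^u` in `B_R × (0,T)`, the boundary
conditions `∂u/∂η = e^v`, `∂v/∂η = e^u` on `∂B_R × (0,T)`, and the initial conditions. -/
structure IsClassicalSolution (n : ℕ) (R T lam1 lam2 : ℝ)
    (u v : EuclideanSpace ℝ (Fin n) → ℝ → ℝ)
    (u₀ v₀ : EuclideanSpace ℝ (Fin n) → ℝ) : Prop where
  cont_u : ContinuousOn (fun p : EuclideanSpace ℝ (Fin n) × ℝ => u p.1 p.2)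
    ((closedBall (0 : EuclideanSpace ℝ (Fin n)) R) ×ˢ Ico (0 : ℝ) T)
  cont_v : ContinuousOn (fun p : EuclideanSpace ℝ (Fin n) × ℝ => v p.1 p.2)
    ((closedBall (0 : EuclideanSpace ℝ (Fin n)) R) ×ˢ Ico (0 : ℝ) T)
  reg_space_u : ∀ t ∈ Ioo (0 : ℝ) T,
    ContDiffOn ℝ 2 (fun x => u x t) (closedBall (0 : EuclideanSpace ℝ (Fin n)) R)
  reg_space_v : ∀ t ∈ Ioo (0 : ℝ) T,
    ContDiffOn ℝ 2 (fun x => v x t) (closedBall (0 : EuclideanSpace ℝ (Fin n)) R)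
  reg_time_u : ∀ x ∈ closedBall (0 : EuclideanSpace ℝ (Fin n)) R, ∀ t ∈ Ioo (0 : ℝ) T,
    DifferentiableAt ℝ (u x) t
  reg_time_v : ∀ x ∈ closedBall (0 : EuclideanSpace ℝ (Fin n)) R, ∀ t ∈ Ioo (0 : ℝ) T,
    DifferentiableAt ℝ (v x) t
  pde_u : ∀ x ∈ ball (0 : EuclideanSpace ℝ (Fin n)) R, ∀ t ∈ Ioo (0 : ℝ) T,
    deriv (u x) t = lap (fun y => u y t) x + lam1 * Real.exp (v x t)
  pde_v : ∀ x ∈ ball (0 : EuclideanSpace ℝ (Fin n)) R, ∀ t ∈ Ioo (0 : ℝ) T,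
    deriv (v x) t = lap (fun y => v y t) x + lam2 * Real.exp (u x t)
  bc_u : ∀ x : EuclideanSpace ℝ (Fin n), ‖x‖ = R → ∀ t ∈ Ioo (0 : ℝ) T,
    normalDeriv R (fun y => u y t) x = Real.exp (v x t)
  bc_v : ∀ x : EuclideanSpace ℝ (Fin n), ‖x‖ = R → ∀ t ∈ Ioo (0 : ℝ) T,
    normalDeriv R (fun y => v y t) x = Real.exp (u x t)
  init_u : ∀ x ∈ closedBall (0 : EuclideanSpace ℝ (Fin n)) R, u x 0 = u₀ x
  init_v : ∀ x ∈ closedBall (0 : EuclideanSpace ℝ (Fin n)) R, v x 0 = v₀ x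

/-- `(u,v)` blows up at time `T`: `limsup_{t→T⁻} sup_{cl(B_R)} (u(·,t) + v(·,t)) = ∞`. -/
def BlowsUpAt (n : ℕ) (R T : ℝ) (u v : EuclideanSpace ℝ (Fin n) → ℝ → ℝ) : Prop :=
  ∀ M : ℝ, ∃ᶠ t in 𝓝[<] T, ∃ x ∈ closedBall (0 : EuclideanSpace ℝ (Fin n)) R, M < u x t + v x t

lemma deriv_nonneg_of_isLocalMaxOn_Iic {f : ℝ → ℝ} {a : ℝ} (h : IsLocalMaxOn f (Iic a) a) :
    0 ≤ deriv f a := by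
  by_cases hf : DifferentiableAt ℝ f a
  · have hcone : (-1 : ℝ) ∈ posTangentConeAt (Iic a) a :=
      mem_posTangentConeAt_of_segment_subset <|
        (convex_Iic a).segment_subset self_mem_Iic (by simp)
    simpa using h.hasFDerivWithinAt_nonpos hf.hasDerivAt.hasFDerivAt.hasFDerivWithinAt hcone
  · rw [deriv_zero_of_not_differentiableAt hf]

lemma iteratedDeriv_two_nonpos_of_isLocalMax {f : ℝ → ℝ} {a : ℝ} (hf : ContinuousAt f a)
    (hmax : IsLocalMax f a) : iteratedDeriv 2 f a ≤ 0 := by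
  rw [iteratedDeriv_succ, iteratedDeriv_one]
  by_contra! hpos
  -- By the second derivative test `a` is also a local minimum, so `f` is constant near `a`.
  have hmin := isLocalMin_of_deriv_deriv_pos hpos hmax.deriv_eq_zero hf
  have hconst : f =ᶠ[𝓝 a] fun _ => f a := by
    filter_upwards [hmax, hmin] with s h₁ h₂ using le_antisymm h₁ h₂
  have hzero : deriv (deriv f) a = 0 := by simpa using hconst.deriv.deriv_eq
  exact hpos.ne' hzero

lemma exp_le_exp_add_mul {a b d C : ℝ} (h : a ≤ b + d) (hd : 0 ≤ d) (hC : exp a ≤ C) :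
    exp a ≤ exp b + C * d :=
  calc exp a = exp b + exp a * (1 - exp (b - a)) := by rw [mul_sub, ← exp_add]; ring_nf
    _ ≤ exp b + exp a * d := by gcongr; linarith [add_one_le_exp (b - a)]
    _ ≤ exp b + C * d := by gcongr

lemma mul_exp_le_mul_exp_add_mul {a b d C l L : ℝ} (h : a ≤ b + d) (hd : 0 ≤ d) (hC : exp a ≤ C)
    (hl : 0 ≤ l) (hlL : l ≤ L) : l * exp a ≤ l * exp b + L * (C * d) :=
  calc l * exp a ≤ l * (exp b + C * d) :=
        mul_le_mul_of_nonneg_left (exp_le_exp_add_mul h hd hC) hl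
    _ = l * exp b + l * (C * d) := mul_add _ _ _
    _ ≤ l * exp b + L * (C * d) := by
        have hC₀ : 0 ≤ C := (exp_pos a).le.trans hC
        gcongr

lemma inv_le_mul_sqrt_of_one_le {a b E τ T : ℝ} (ha : 0 ≤ a) (hb : 0 ≤ b) (hE : 0 ≤ E)
    (hτ : 0 ≤ τ) (hτT : τ ≤ T) (h : 1 ≤ (a * E ^ 2 + b * E) * τ) :
    (1 + a + b * √T)⁻¹ ≤ E * √τ := by
  set y := E * √τ with hy
  have hy₀ : 0 ≤ y := by positivity
  have hD : 1 ≤ 1 + a + b * √T := by linarith [mul_nonneg hb (sqrt_nonneg T)]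
  rw [inv_le_iff_one_le_mul₀ (by linarith)]
  by_contra! hlt
  have hy₁ : y ≤ 1 := by nlinarith
  have hquad : (a * E ^ 2 + b * E) * τ ≤ (a + b * √T) * y :=
    calc (a * E ^ 2 + b * E) * τ = (a * y + b * √τ) * y := by
          rw [hy]; linear_combination (-(a * E ^ 2 + b * E)) * mul_self_sqrt hτ
      _ ≤ (a * 1 + b * √T) * y := by gcongr
      _ = (a + b * √T) * y := by ring
  linarith

section FirstContact

variable {ι X : Type*} [Finite ι] [TopologicalSpace X] [T2Space X] {K : Set X} {a b : ℝ}
  {f : ι → X → ℝ → ℝ}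

lemma isCompact_setOf_exists_nonneg (hK : IsCompact K)
    (hf : ∀ i, ContinuousOn (fun p : X × ℝ => f i p.1 p.2) (K ×ˢ Icc a b)) :
    IsCompact {t | t ∈ Icc a b ∧ ∃ i, ∃ x ∈ K, 0 ≤ f i x t} := by
  have hKI : IsCompact (K ×ˢ Icc a b) := hK.prod isCompact_Icc
  have hcpt : IsCompact
      (⋃ i, Prod.snd '' (K ×ˢ Icc a b ∩ (fun p : X × ℝ => f i p.1 p.2) ⁻¹' Ici 0)) :=
    isCompact_iUnion fun i => .image (hKI.of_isClosed_subset
      ((hf i).preimage_isClosed_of_isClosed hKI.isClosed isClosed_Ici) inter_subset_left)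
      continuous_snd
  convert hcpt using 1
  ext t
  simp only [mem_ofPred_eq, mem_iUnion, mem_image, mem_inter_iff, mem_prod, mem_preimage, mem_Ici,
    Prod.exists, exists_eq_right]
  tauto

lemma exists_first_contact (hK : IsCompact K)
    (hf : ∀ i, ContinuousOn (fun p : X × ℝ => f i p.1 p.2) (K ×ˢ Icc a b))
    (hinit : ∀ i, ∀ x ∈ K, f i x a < 0) (hpos : ∃ t ∈ Icc a b, ∃ i, ∃ x ∈ K, 0 ≤ f i x t) :
    ∃ t ∈ Ioc a b, ∃ i, ∃ x ∈ K, f i x t = 0 ∧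
      ∀ j, ∀ y ∈ K, ∀ s ∈ Icc a t, f j y s ≤ 0 := by
  obtain ⟨t, ⟨ht, i, x, hx, hxt⟩, hleast⟩ :=
    (isCompact_setOf_exists_nonneg hK hf).exists_isLeast hpos
  have hat : a < t := ht.1.lt_of_ne fun h => (hinit i x hx).not_ge (h ▸ hxt)
  have hneg : ∀ j, ∀ y ∈ K, ∀ s ∈ Ico a t, f j y s ≤ 0 := fun j y hy s hs =>
    le_of_not_ge fun h => (hleast ⟨⟨hs.1, hs.2.le.trans ht.2⟩, j, y, hy, h⟩).not_gt hs.2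
  have hnonpos : ∀ j, ∀ y ∈ K, ∀ s ∈ Icc a t, f j y s ≤ 0 := by
    intro j y hy s hs
    have hcont : ContinuousOn (f j y) (Icc a t) :=
      (hf j).comp (f := fun s => (y, s)) (by fun_prop) fun s hs => ⟨hy, hs.1, hs.2.trans ht.2⟩
    rw [← closure_Ico hat.ne] at hs hcont
    exact ContinuousWithinAt.closure_le hs ((hcont s hs).mono subset_closure)
      continuousWithinAt_const (hneg j y hy)
  exact ⟨t, ⟨hat, ht.2⟩, i, x, hx, le_antisymm (hnonpos i x hx t ⟨hat.le, le_rfl⟩) hxt, hnonpos⟩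

end FirstContact

section NormedSpace

variable {E : Type*} [NormedAddCommGroup E] [NormedSpace ℝ E]

lemma hasDerivAt_line (x e : E) (s : ℝ) : HasDerivAt (fun s : ℝ => x + s • e) e s := by
  simpa using ((hasDerivAt_id s).smul_const e).const_add x

lemma iteratedDeriv_two_line {f : E → ℝ} {x : E} (hf : ContDiffAt ℝ 2 f x) (e : E) :
    iteratedDeriv 2 (fun s : ℝ => f (x + s • e)) 0 = iteratedFDeriv ℝ 2 f x ![e, e] := by
  have hx : x = x + (0 : ℝ) • e := by simp
  have hfderiv : deriv (fun s : ℝ => f (x + s • e)) =ᶠ[𝓝 0] fun s => fderiv ℝ f (x + s • e) e := by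
    have hev : ∀ᶠ y in 𝓝 (x + (0 : ℝ) • e), ContDiffAt ℝ 2 f y := hx ▸ hf.eventually (by simp)
    filter_upwards [(hasDerivAt_line x e 0).continuousAt.eventually hev] with s hs
    have hfs := (hs.differentiableAt two_ne_zero).hasFDerivAt
    exact (hfs.comp_hasDerivAt s (hasDerivAt_line x e s)).deriv
  have hdiff : DifferentiableAt ℝ (fderiv ℝ f) (x + (0 : ℝ) • e) :=
    hx ▸ (hf.fderiv_right (m := 1) (by norm_num)).differentiableAt one_ne_zero
  have hsecond : HasDerivAt (fun s : ℝ => fderiv ℝ f (x + s • e) e)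
      (fderiv ℝ (fderiv ℝ f) (x + (0 : ℝ) • e) e e) 0 :=
    (ContinuousLinearMap.apply ℝ ℝ e).hasFDerivAt.comp_hasDerivAt (0 : ℝ)
      (hdiff.hasFDerivAt.comp_hasDerivAt (0 : ℝ) (hasDerivAt_line x e 0))
  rw [iteratedDeriv_succ, iteratedDeriv_one, hfderiv.deriv_eq, hsecond.deriv, ← hx,
    iteratedFDeriv_two_apply]
  rfl

end NormedSpace

lemma exists_linearIsometryEquiv_apply_eq {E : Type*} [NormedAddCommGroup E]
    [InnerProductSpace ℝ E] {x y : E} (h : ‖x‖ = ‖y‖) : ∃ Q : E ≃ₗᵢ[ℝ] E, Q x = y :=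
  ⟨(ℝ ∙ (x - y))ᗮ.reflection, Submodule.reflection_sub h⟩

section Ball

variable {n : ℕ} {R : ℝ}

local notation "𝔼" n:max => EuclideanSpace ℝ (Fin n)

lemma lap_eq_laplacian {f : 𝔼 n → ℝ} {x : 𝔼 n} (hf : ContDiffAt ℝ 2 f x) :
    lap f x = Laplacian.laplacian f x := by
  simp only [lap, iteratedDeriv_two_line hf,
    InnerProductSpace.laplacian_eq_iteratedFDeriv_orthonormalBasis f
      (EuclideanSpace.basisFun (Fin n) ℝ), EuclideanSpace.basisFun_apply]

lemma lap_add {f g : 𝔼 n → ℝ} {x : 𝔼 n} (hf : ContDiffAt ℝ 2 f x) (hg : ContDiffAt ℝ 2 g x) :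
    lap (fun y => f y + g y) x = lap f x + lap g x := by
  rw [lap_eq_laplacian hf, lap_eq_laplacian hg, lap_eq_laplacian (hf.add hg)]
  exact hf.laplacian_add hg

lemma lap_sub {f g : 𝔼 n → ℝ} {x : 𝔼 n} (hf : ContDiffAt ℝ 2 f x) (hg : ContDiffAt ℝ 2 g x) :
    lap (fun y => f y - g y) x = lap f x - lap g x := by
  rw [lap_eq_laplacian hf, lap_eq_laplacian hg, lap_eq_laplacian (hf.sub hg)]
  exact hf.laplacian_sub hg

lemma lap_const (c : ℝ) (x : 𝔼 n) : lap (fun _ => c) x = 0 := by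
  simp [lap, iteratedDeriv_succ]

lemma lap_const_mul (c : ℝ) (f : 𝔼 n → ℝ) (x : 𝔼 n) : lap (fun y => c * f y) x = c * lap f x := by
  simp only [lap, iteratedDeriv_const_mul_field, Finset.mul_sum]

lemma lap_comp_linearIsometryEquiv {f : 𝔼 n → ℝ} (Q : 𝔼 n ≃ₗᵢ[ℝ] 𝔼 n) {x : 𝔼 n}
    (hf : ContDiffAt ℝ 2 f (Q x)) : lap (fun y => f (Q y)) x = lap f (Q x) := by
  rw [lap_eq_laplacian hf, InnerProductSpace.laplacian_eq_iteratedFDeriv_orthonormalBasis f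
    ((EuclideanSpace.basisFun (Fin n) ℝ).map Q)]
  simp only [lap, map_add, map_smul, iteratedDeriv_two_line hf, OrthonormalBasis.map_apply,
    EuclideanSpace.basisFun_apply]

lemma lap_nonpos_of_isLocalMax {f : 𝔼 n → ℝ} {x : 𝔼 n} (hf : ContinuousAt f x)
    (hmax : IsLocalMax f x) : lap f x ≤ 0 := by
  refine Finset.sum_nonpos fun i _ => ?_
  have hline : Continuous fun s : ℝ => x + s • EuclideanSpace.single i (1 : ℝ) := by fun_prop
  have hx : x + (0 : ℝ) • EuclideanSpace.single i (1 : ℝ) = x := by simp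
  rw [← hx] at hf hmax
  exact iteratedDeriv_two_nonpos_of_isLocalMax
    (hf.comp (f := fun s : ℝ => x + s • EuclideanSpace.single i (1 : ℝ)) hline.continuousAt)
    (hline.continuousAt.eventually hmax)

lemma lap_nonneg_of_isLocalMin {f : 𝔼 n → ℝ} {x : 𝔼 n} (hf : ContinuousAt f x)
    (hmin : IsLocalMin f x) : 0 ≤ lap f x := by
  have hneg : lap (fun y => -f y) x = -lap f x := by simpa using lap_const_mul (-1) f x
  exact neg_nonpos.1 (hneg ▸ lap_nonpos_of_isLocalMax hf.neg hmin.neg)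

/-- The pairs `(x, y)` of points of the closed ball of radius `R` with `‖x‖ ≤ ‖y‖`.  A bound
`f x ≤ g y` over all of them is the form of comparison used here: for `f = g` it says that `f` is a
radially nondecreasing function. -/
def radialPairs (R : ℝ) : Set (𝔼 n × 𝔼 n) := {p | ‖p.1‖ ≤ ‖p.2‖ ∧ ‖p.2‖ ≤ R}

lemma isCompact_radialPairs : IsCompact (radialPairs R : Set (𝔼 n × 𝔼 n)) := by
  have hclosed : IsClosed (radialPairs R : Set (𝔼 n × 𝔼 n)) :=
    (isClosed_le continuous_fst.norm continuous_snd.norm).inter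
      (isClosed_le continuous_snd.norm continuous_const)
  have hball := isCompact_closedBall (0 : 𝔼 n) R
  refine (hball.prod hball).of_isClosed_subset hclosed ?_
  rintro ⟨x, y⟩ ⟨hxy, hy⟩
  exact ⟨mem_closedBall_zero_iff.2 (hxy.trans hy), mem_closedBall_zero_iff.2 hy⟩

/-- The second-order condition at an interior maximum over `radialPairs`.  If `‖x‖ < ‖y‖` the two
points can be moved independently; if `‖x‖ = ‖y‖` they can be moved together along an isometry. -/
lemma lap_le_lap_of_isMaxOn_radialPairs {f g : 𝔼 n → ℝ} {x y : 𝔼 n} (hxy : (x, y) ∈ radialPairs R)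
    (hy : ‖y‖ < R) (hf : ContDiffAt ℝ 2 f x) (hg : ContDiffAt ℝ 2 g y)
    (hmax : IsMaxOn (fun p : 𝔼 n × 𝔼 n => f p.1 - g p.2) (radialPairs R) (x, y)) :
    lap f x ≤ lap g y := by
  have hnorm : ‖x‖ ≤ ‖y‖ := hxy.1
  rcases hnorm.lt_or_eq with hlt | heq
  · have hfmax : IsLocalMax f x := by
      filter_upwards [continuous_norm.continuousAt.eventually_lt_const hlt] with z hz
      exact (sub_le_sub_iff_right _).1 (hmax (show (z, y) ∈ radialPairs R from ⟨hz.le, hy.le⟩))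
    have hgmin : IsLocalMin g y := by
      filter_upwards [continuous_norm.continuousAt.eventually_const_lt hlt,
        continuous_norm.continuousAt.eventually_lt_const hy] with z hxz hzR
      exact (sub_le_sub_iff_left _).1 (hmax (show (x, z) ∈ radialPairs R from ⟨hxz.le, hzR.le⟩))
    exact (lap_nonpos_of_isLocalMax hf.continuousAt hfmax).trans
      (lap_nonneg_of_isLocalMin hg.continuousAt hgmin)
  · obtain ⟨Q, rfl⟩ := exists_linearIsometryEquiv_apply_eq heq
    have hgQ : ContDiffAt ℝ 2 (fun z => g (Q z)) x := hg.comp x Q.contDiff.contDiffAt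
    have hlocmax : IsLocalMax (fun z => f z - g (Q z)) x := by
      filter_upwards [continuous_norm.continuousAt.eventually_lt_const (heq.trans_lt hy)] with z hz
      exact hmax (show (z, Q z) ∈ radialPairs R from
        ⟨(Q.norm_map z).ge, (Q.norm_map z).trans_le hz.le⟩)
    have hlap := lap_nonpos_of_isLocalMax (hf.sub hgQ).continuousAt hlocmax
    rw [lap_sub hf hgQ, lap_comp_linearIsometryEquiv Q hg] at hlap
    linarith

lemma norm_add_smul_inv_smul (hR : 0 < R) {x : 𝔼 n} (hx : ‖x‖ = R) {s : ℝ} (hs : -R ≤ s) :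
    ‖x + s • (R⁻¹ • x)‖ = R + s := by
  have hray : x + s • (R⁻¹ • x) = (1 + s * R⁻¹) • x := by rw [add_smul, one_smul, mul_smul]
  have hnonneg : 0 ≤ 1 + s * R⁻¹ := by
    have : 1 + s * R⁻¹ = (R + s) / R := by field_simp
    rw [this]
    exact div_nonneg (by linarith) hR.le
  rw [hray, norm_smul, hx, norm_of_nonneg hnonneg]
  field_simp

lemma normalDeriv_le_of_isMaxOn_radialPairs (hR : 0 < R) {f g : 𝔼 n → ℝ} {x y : 𝔼 n} (hx : ‖x‖ = R)
    (hy : ‖y‖ = R) (hf : DifferentiableAt ℝ (fun s : ℝ => f (x + s • (R⁻¹ • x))) 0)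
    (hg : DifferentiableAt ℝ (fun s : ℝ => g (y + s • (R⁻¹ • y))) 0)
    (hmax : IsMaxOn (fun p : 𝔼 n × 𝔼 n => f p.1 - g p.2) (radialPairs R) (x, y)) :
    normalDeriv R g y ≤ normalDeriv R f x := by
  rw [← sub_nonneg, normalDeriv, normalDeriv, ← deriv_fun_sub hf hg]
  apply deriv_nonneg_of_isLocalMaxOn_Iic
  filter_upwards [self_mem_nhdsWithin,
    mem_nhdsWithin_of_mem_nhds (Ici_mem_nhds (neg_lt_zero.2 hR))] with s hs₀ hsR
  have hpair : (x + s • (R⁻¹ • x), y + s • (R⁻¹ • y)) ∈ radialPairs R := by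
    simp only [radialPairs, mem_ofPred_eq, norm_add_smul_inv_smul hR hx hsR,
      norm_add_smul_inv_smul hR hy hsR, le_refl, true_and]
    exact add_le_of_nonpos_right hs₀
  simpa using hmax hpair

lemma normalDeriv_nonpos_of_isMaxOn_radialPairs (hR : 0 < R) {f g : 𝔼 n → ℝ} {x y : 𝔼 n}
    (hx : ‖x‖ < R) (hy : ‖y‖ = R)
    (hmax : IsMaxOn (fun p : 𝔼 n × 𝔼 n => f p.1 - g p.2) (radialPairs R) (x, y)) :
    normalDeriv R g y ≤ 0 := by
  rw [← neg_nonneg, normalDeriv, ← deriv.fun_neg]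
  apply deriv_nonneg_of_isLocalMaxOn_Iic
  filter_upwards [self_mem_nhdsWithin,
    mem_nhdsWithin_of_mem_nhds (Ici_mem_nhds (show ‖x‖ - R < 0 by linarith))] with s hs₀ hsx
  have hnorm := norm_add_smul_inv_smul hR hy (s := s) (by linarith [mem_Ici.1 hsx, norm_nonneg x])
  have hpair : (x, y + s • (R⁻¹ • y)) ∈ radialPairs R :=
    ⟨hnorm ▸ sub_le_iff_le_add'.1 hsx, hnorm ▸ add_le_of_nonpos_right hs₀⟩
  simpa using (sub_le_sub_iff_left _).1 (hmax hpair)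

/-- The heat operator `∂ₜ - Δ`, in which the comparison principle `lt_of_heatOp_lt` is stated. -/
noncomputable def heatOp (f : 𝔼 n → ℝ → ℝ) (x : 𝔼 n) (t : ℝ) : ℝ :=
  deriv (f x) t - lap (fun y => f y t) x

/-- Classical regularity on the parabolic cylinder `cl(B_R) × [a, b]`, with exactly the smoothness
that the comparison principle `lt_of_heatOp_lt` uses.  The radial line through a point of the sphere
is followed in both directions, so that `normalDeriv` is a genuine derivative. -/
structure IsRegularOn (R a b : ℝ) (f : 𝔼 n → ℝ → ℝ) : Prop where
  continuousOn : ContinuousOn (fun p : 𝔼 n × ℝ => f p.1 p.2) (closedBall 0 R ×ˢ Icc a b)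
  contDiffAt : ∀ x, ‖x‖ < R → ∀ t ∈ Ioc a b, ContDiffAt ℝ 2 (fun y => f y t) x
  differentiableAt_time : ∀ x, ‖x‖ < R → ∀ t ∈ Ioc a b, DifferentiableAt ℝ (f x) t
  differentiableAt_normal : ∀ x, ‖x‖ = R → ∀ t ∈ Ioc a b,
    DifferentiableAt ℝ (fun s : ℝ => f (x + s • (R⁻¹ • x)) t) 0

lemma IsRegularOn.add {a b : ℝ} {f g : 𝔼 n → ℝ → ℝ} (hf : IsRegularOn R a b f)
    (hg : IsRegularOn R a b g) : IsRegularOn R a b (fun x t => f x t + g x t) where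
  continuousOn := hf.continuousOn.add hg.continuousOn
  contDiffAt x hx t ht := (hf.contDiffAt x hx t ht).add (hg.contDiffAt x hx t ht)
  differentiableAt_time x hx t ht :=
    (hf.differentiableAt_time x hx t ht).fun_add (hg.differentiableAt_time x hx t ht)
  differentiableAt_normal x hx t ht :=
    (hf.differentiableAt_normal x hx t ht).fun_add (hg.differentiableAt_normal x hx t ht)

lemma IsRegularOn.of_contDiff {f : 𝔼 n → ℝ → ℝ} (hf : ContDiff ℝ 2 fun p : 𝔼 n × ℝ => f p.1 p.2)
    (a b : ℝ) : IsRegularOn R a b f where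
  continuousOn := hf.continuous.continuousOn
  contDiffAt x _ t _ :=
    (hf.comp (g := fun p : 𝔼 n × ℝ => f p.1 p.2) (f := fun y => (y, t)) (by fun_prop)).contDiffAt
  differentiableAt_time x _ t _ :=
    (hf.comp (g := fun p : 𝔼 n × ℝ => f p.1 p.2) (f := fun s => (x, s))
      (by fun_prop)).differentiable two_ne_zero t
  differentiableAt_normal x _ t _ :=
    (hf.comp (g := fun p : 𝔼 n × ℝ => f p.1 p.2) (f := fun s : ℝ => (x + s • (R⁻¹ • x), t))
      (by fun_prop)).differentiable two_ne_zero 0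

lemma heatOp_add {f g : 𝔼 n → ℝ → ℝ} {x : 𝔼 n} {t : ℝ} (hf : ContDiffAt ℝ 2 (fun y => f y t) x)
    (hg : ContDiffAt ℝ 2 (fun y => g y t) x) (hft : DifferentiableAt ℝ (f x) t)
    (hgt : DifferentiableAt ℝ (g x) t) :
    heatOp (fun y s => f y s + g y s) x t = heatOp f x t + heatOp g x t := by
  rw [heatOp, heatOp, heatOp, lap_add hf hg, deriv_fun_add hft hgt]
  ring

lemma heatOp_mul {φ : ℝ → ℝ} (k : 𝔼 n → ℝ) (x : 𝔼 n) {t : ℝ} (hφ : DifferentiableAt ℝ φ t) :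
    heatOp (fun y s => φ s * k y) x t = deriv φ t * k x - φ t * lap k x := by
  rw [heatOp, lap_const_mul, deriv_mul_const hφ]

lemma heatOp_le_of_isMaxOn_radialPairs {f g : 𝔼 n → ℝ → ℝ} {x y : 𝔼 n} {t : ℝ}
    (hxy : (x, y) ∈ radialPairs R) (hy : ‖y‖ < R) (hf : ContDiffAt ℝ 2 (fun z => f z t) x)
    (hg : ContDiffAt ℝ 2 (fun z => g z t) y) (hft : DifferentiableAt ℝ (f x) t)
    (hgt : DifferentiableAt ℝ (g y) t)
    (hmax : IsMaxOn (fun p : 𝔼 n × 𝔼 n => f p.1 t - g p.2 t) (radialPairs R) (x, y))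
    (htime : IsLocalMaxOn (fun s => f x s - g y s) (Iic t) t) :
    heatOp g y t ≤ heatOp f x t := by
  have hlap := lap_le_lap_of_isMaxOn_radialPairs hxy hy hf hg hmax
  have hderiv := deriv_nonneg_of_isLocalMaxOn_Iic htime
  rw [deriv_fun_sub hft hgt] at hderiv
  rw [heatOp, heatOp]
  linarith

/-- At a contact pair with `‖x‖ < R = ‖y‖` the point `y` can still be pulled inwards; this is the
case that `hbdry_pos` excludes. -/
theorem lt_of_heatOp_lt {ι : Type*} [Finite ι] {f g : ι → 𝔼 n → ℝ → ℝ} {a b : ℝ} (hR : 0 < R)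
    (hf : ∀ i, IsRegularOn R a b (f i)) (hg : ∀ i, IsRegularOn R a b (g i))
    (hinit : ∀ i x y, ‖x‖ ≤ ‖y‖ → ‖y‖ ≤ R → f i x a < g i y a)
    (hint : ∀ i x y, ‖x‖ ≤ ‖y‖ → ‖y‖ < R → ∀ t ∈ Ioc a b, f i x t = g i y t →
      (∀ j, f j x t ≤ g j y t) → heatOp (f i) x t < heatOp (g i) y t)
    (hbdry : ∀ i x y, ‖x‖ = R → ‖y‖ = R → ∀ t ∈ Ioc a b, f i x t = g i y t →
      (∀ j, f j x t ≤ g j y t) →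
      normalDeriv R (fun z => f i z t) x < normalDeriv R (fun z => g i z t) y)
    (hbdry_pos : ∀ i y, ‖y‖ = R → ∀ t ∈ Ioc a b, 0 < normalDeriv R (fun z => g i z t) y) :
    ∀ i x y, ‖x‖ ≤ ‖y‖ → ‖y‖ ≤ R → ∀ t ∈ Icc a b, f i x t < g i y t := by
  by_contra! hcon
  obtain ⟨i₀, x₀, y₀, hxy₀, hy₀, t₀, ht₀, hle₀⟩ := hcon
  have hcont : ∀ i, ContinuousOn (fun q : (𝔼 n × 𝔼 n) × ℝ => f i q.1.1 q.2 - g i q.1.2 q.2)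
      (radialPairs R ×ˢ Icc a b) := fun i =>
    ((hf i).continuousOn.comp (f := fun q : (𝔼 n × 𝔼 n) × ℝ => (q.1.1, q.2)) (by fun_prop)
      fun q hq => ⟨mem_closedBall_zero_iff.2 (hq.1.1.trans hq.1.2), hq.2⟩).sub
    ((hg i).continuousOn.comp (f := fun q : (𝔼 n × 𝔼 n) × ℝ => (q.1.2, q.2)) (by fun_prop)
      fun q hq => ⟨mem_closedBall_zero_iff.2 hq.1.2, hq.2⟩)
  obtain ⟨t, ht, i, ⟨x, y⟩, hxy, hzero, hnonpos⟩ :=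
    exists_first_contact (f := fun i p t => f i p.1 t - g i p.2 t) isCompact_radialPairs hcont
      (fun i p hp => sub_neg.2 (hinit i p.1 p.2 hp.1 hp.2))
      ⟨t₀, ht₀, i₀, (x₀, y₀), ⟨hxy₀, hy₀⟩, sub_nonneg.2 hle₀⟩
  have htI : t ∈ Icc a t := ⟨ht.1.le, le_rfl⟩
  have heq : f i x t = g i y t := sub_eq_zero.1 hzero
  have hle : ∀ j, f j x t ≤ g j y t := fun j => sub_nonpos.1 (hnonpos j (x, y) hxy t htI)
  have hmax : IsMaxOn (fun p : 𝔼 n × 𝔼 n => f i p.1 t - g i p.2 t) (radialPairs R) (x, y) :=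
    fun p hp => (hnonpos i p hp t htI).trans_eq hzero.symm
  rcases hxy.2.lt_or_eq with hyR | hyR
  · have hxR : ‖x‖ < R := hxy.1.trans_lt hyR
    have htime : IsLocalMaxOn (fun s => f i x s - g i y s) (Iic t) t := by
      filter_upwards [self_mem_nhdsWithin, mem_nhdsWithin_of_mem_nhds (Ici_mem_nhds ht.1)]
        with s hst has using (hnonpos i (x, y) hxy s ⟨has, hst⟩).trans_eq hzero.symm
    exact (hint i x y hxy.1 hyR t ht heq hle).not_ge <|
      heatOp_le_of_isMaxOn_radialPairs hxy hyR ((hf i).contDiffAt x hxR t ht)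
        ((hg i).contDiffAt y hyR t ht) ((hf i).differentiableAt_time x hxR t ht)
        ((hg i).differentiableAt_time y hyR t ht) hmax htime
  · have hxR : ‖x‖ ≤ R := hxy.1.trans_eq hyR
    rcases hxR.lt_or_eq with hxR | hxR
    · exact (hbdry_pos i y hyR t ht).not_ge
        (normalDeriv_nonpos_of_isMaxOn_radialPairs (f := fun z => f i z t) hR hxR hyR hmax)
    · exact (hbdry i x y hxR hyR t ht heq hle).not_ge <|
        normalDeriv_le_of_isMaxOn_radialPairs hR hxR hyR
          ((hf i).differentiableAt_normal x hxR t ht) ((hg i).differentiableAt_normal y hyR t ht)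
          hmax

/-- A barrier with values in `(0, 1]` on the ball, equal to `1` on the sphere, where its normal
derivative is `2 * A`; it decays over a layer of thickness of order `A⁻¹` along the sphere. -/
noncomputable def boundaryLayer (R A : ℝ) (x : 𝔼 n) : ℝ := exp (A / R * (‖x‖ ^ 2 - R ^ 2))

lemma boundaryLayer_pos (A : ℝ) (x : 𝔼 n) : 0 < boundaryLayer R A x := exp_pos _

lemma boundaryLayer_of_norm_eq (A : ℝ) {x : 𝔼 n} (hx : ‖x‖ = R) : boundaryLayer R A x = 1 := by
  simp [boundaryLayer, hx]

lemma boundaryLayer_le_one (hR : 0 < R) {A : ℝ} (hA : 0 ≤ A) {x : 𝔼 n} (hx : ‖x‖ ≤ R) :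
    boundaryLayer R A x ≤ 1 := by
  refine exp_le_one_iff.2 (mul_nonpos_of_nonneg_of_nonpos (by positivity) (sub_nonpos.2 ?_))
  gcongr

lemma contDiff_boundaryLayer (A : ℝ) : ContDiff ℝ 2 (boundaryLayer R A : 𝔼 n → ℝ) :=
  contDiff_exp.comp (contDiff_const.mul ((contDiff_norm_sq ℝ).sub contDiff_const))

lemma hasDerivAt_boundaryLayer_line (A : ℝ) (x e : 𝔼 n) (s : ℝ) :
    HasDerivAt (fun s : ℝ => boundaryLayer R A (x + s • e))
      (boundaryLayer R A (x + s • e) * (2 * (A / R) * inner ℝ (x + s • e) e)) s := by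
  refine (((hasDerivAt_line x e s).norm_sq.sub_const (R ^ 2)).const_mul (A / R)).exp.congr_deriv ?_
  rw [boundaryLayer]
  ring

lemma iteratedDeriv_two_boundaryLayer_line (A : ℝ) (x e : 𝔼 n) :
    iteratedDeriv 2 (fun s : ℝ => boundaryLayer R A (x + s • e)) 0 =
      (4 * (A / R) ^ 2 * inner ℝ x e ^ 2 + 2 * (A / R) * ‖e‖ ^ 2) * boundaryLayer R A x := by
  have hinner : HasDerivAt (fun s : ℝ => inner ℝ (x + s • e) e) (‖e‖ ^ 2) 0 := by
    simp only [inner_add_left, real_inner_smul_left, real_inner_self_eq_norm_sq]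
    simpa using ((hasDerivAt_id (0 : ℝ)).mul_const (‖e‖ ^ 2)).const_add (inner ℝ x e)
  have hderiv := (hasDerivAt_boundaryLayer_line (R := R) A x e 0).fun_mul
    (hinner.const_mul (2 * (A / R)))
  rw [iteratedDeriv_succ, iteratedDeriv_one,
    funext fun s => (hasDerivAt_boundaryLayer_line (R := R) A x e s).deriv, hderiv.deriv, zero_smul,
    add_zero]
  ring

lemma lap_boundaryLayer (A : ℝ) (x : 𝔼 n) :
    lap (boundaryLayer R A) x =
      (4 * (A / R) ^ 2 * ‖x‖ ^ 2 + 2 * (A / R) * n) * boundaryLayer R A x := by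
  simp only [lap, iteratedDeriv_two_boundaryLayer_line, ← Finset.sum_mul, Finset.sum_add_distrib,
    ← Finset.mul_sum, EuclideanSpace.norm_sq_eq x]
  simp [EuclideanSpace.inner_single_right, mul_comm]

lemma lap_boundaryLayer_le (hR : 0 < R) (A : ℝ) {x : 𝔼 n} (hx : ‖x‖ ≤ R) :
    lap (boundaryLayer R A) x ≤ (4 * A ^ 2 + 2 * n / R * A) * boundaryLayer R A x := by
  rw [lap_boundaryLayer]
  refine mul_le_mul_of_nonneg_right ?_ (boundaryLayer_pos A x).le
  calc 4 * (A / R) ^ 2 * ‖x‖ ^ 2 + 2 * (A / R) * n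
      ≤ 4 * (A / R) ^ 2 * R ^ 2 + 2 * (A / R) * n := by gcongr
    _ = 4 * A ^ 2 + 2 * n / R * A := by field_simp

lemma hasDerivAt_boundaryLayer_normal (hR : 0 < R) (A : ℝ) {x : 𝔼 n} (hx : ‖x‖ = R) :
    HasDerivAt (fun s : ℝ => boundaryLayer R A (x + s • (R⁻¹ • x))) (2 * A) 0 := by
  convert hasDerivAt_boundaryLayer_line A x (R⁻¹ • x) 0 using 1
  rw [zero_smul, add_zero, boundaryLayer_of_norm_eq A hx, real_inner_smul_right,
    real_inner_self_eq_norm_sq, hx]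
  field_simp

lemma IsRegularOn.add_mul_boundaryLayer {a b : ℝ} {f : 𝔼 n → ℝ → ℝ} {φ : ℝ → ℝ}
    (hf : IsRegularOn R a b f) (hφ : ContDiff ℝ 2 φ) (A : ℝ) :
    IsRegularOn R a b (fun x t => f x t + φ t * boundaryLayer R A x) :=
  hf.add <| .of_contDiff
    ((hφ.comp contDiff_snd).mul ((contDiff_boundaryLayer A).comp contDiff_fst)) a b

lemma le_heatOp_add_mul_boundaryLayer (hR : 0 < R) {f : 𝔼 n → ℝ → ℝ} {φ : ℝ → ℝ} (A : ℝ) {x : 𝔼 n}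
    (hx : ‖x‖ ≤ R) {t : ℝ} (hf : ContDiffAt ℝ 2 (fun y => f y t) x)
    (hft : DifferentiableAt ℝ (f x) t) (hφ : DifferentiableAt ℝ φ t) (hφ₀ : 0 ≤ φ t) :
    heatOp f x t + (deriv φ t - (4 * A ^ 2 + 2 * n / R * A) * φ t) * boundaryLayer R A x ≤
      heatOp (fun y s => f y s + φ s * boundaryLayer R A y) x t := by
  rw [heatOp_add (g := fun y s => φ s * boundaryLayer R A y) hf
    (contDiffAt_const.mul (contDiff_boundaryLayer A).contDiffAt) hft (hφ.mul_const _),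
    heatOp_mul _ _ hφ]
  have hlap := mul_le_mul_of_nonneg_left (lap_boundaryLayer_le hR A hx) hφ₀
  linear_combination hlap

lemma normalDeriv_add_mul_boundaryLayer (hR : 0 < R) {f : 𝔼 n → ℝ} (c A : ℝ) {x : 𝔼 n}
    (hx : ‖x‖ = R) (hf : DifferentiableAt ℝ (fun s : ℝ => f (x + s • (R⁻¹ • x))) 0) :
    normalDeriv R (fun y => f y + c * boundaryLayer R A y) x = normalDeriv R f x + c * (2 * A) :=
  (hf.hasDerivAt.fun_add ((hasDerivAt_boundaryLayer_normal hR A hx).const_mul c)).deriv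

lemma isRegularOn_time_add_boundaryLayer {ψ : ℝ → ℝ} (hψ : ContDiff ℝ 2 ψ) (A a b : ℝ) :
    IsRegularOn R a b (fun (x : 𝔼 n) t => ψ t + boundaryLayer R A x) :=
  .of_contDiff ((hψ.comp contDiff_snd).add ((contDiff_boundaryLayer A).comp contDiff_fst)) a b

lemma le_heatOp_time_add_boundaryLayer (hR : 0 < R) {A : ℝ} (hA : 0 ≤ A) (ψ : ℝ → ℝ) {x : 𝔼 n}
    (hx : ‖x‖ ≤ R) (t : ℝ) :
    deriv ψ t - (4 * A ^ 2 + 2 * n / R * A) ≤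
      heatOp (fun y s => ψ s + boundaryLayer R A y) x t := by
  rw [heatOp, deriv_add_const,
    lap_add (f := fun _ => ψ t) contDiffAt_const (contDiff_boundaryLayer A).contDiffAt, lap_const,
    zero_add]
  gcongr
  exact (lap_boundaryLayer_le hR A hx).trans
    (mul_le_of_le_one_right (by positivity) (boundaryLayer_le_one hR hA hx))

lemma normalDeriv_const_add_boundaryLayer (hR : 0 < R) (c A : ℝ) {x : 𝔼 n} (hx : ‖x‖ = R) :
    normalDeriv R (fun y => c + boundaryLayer R A y) x = 2 * A :=
  ((hasDerivAt_boundaryLayer_normal hR A hx).const_add c).deriv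

lemma normalDeriv_add_const (f : 𝔼 n → ℝ) (c : ℝ) (x : 𝔼 n) :
    normalDeriv R (fun y => f y + c) x = normalDeriv R f x :=
  deriv_add_const c

lemma heatOp_add_const (f : 𝔼 n → ℝ → ℝ) (c : ℝ) (x : 𝔼 n) (t : ℝ) :
    heatOp (fun y s => f y s + c) x t = heatOp f x t := by
  simp [heatOp, lap, iteratedDeriv_succ]

/-- The system `∂ₜ wᵢ = Δ wᵢ + λᵢ exp w_{!i}` in the ball, `∂wᵢ/∂η = exp w_{!i}` on the sphere, with
the two components indexed by `Bool` so that the partner of component `i` is component `!i`. -/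
structure ExpSystem (R T : ℝ) (lam : Bool → ℝ) (w : Bool → 𝔼 n → ℝ → ℝ) : Prop where
  isRegularOn : ∀ i a b, 0 ≤ a → b < T → IsRegularOn R a b (w i)
  heatOp_eq : ∀ i x, ‖x‖ < R → ∀ t ∈ Ioo 0 T, heatOp (w i) x t = lam i * exp (w (!i) x t)
  normalDeriv_eq : ∀ i x, ‖x‖ = R → ∀ t ∈ Ioo 0 T,
    normalDeriv R (fun y => w i y t) x = exp (w (!i) x t)

/-- A nonzero value of `normalDeriv` is not the junk value of `deriv`, so the boundary condition
gives differentiability across the sphere. -/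
lemma IsRegularOn.of_normalDeriv_ne_zero {f : 𝔼 n → ℝ → ℝ} {T a b : ℝ}
    (hcont : ContinuousOn (fun p : 𝔼 n × ℝ => f p.1 p.2) (closedBall 0 R ×ˢ Ico 0 T))
    (hspace : ∀ t ∈ Ioo 0 T, ContDiffOn ℝ 2 (fun x => f x t) (closedBall 0 R))
    (htime : ∀ x ∈ closedBall 0 R, ∀ t ∈ Ioo 0 T, DifferentiableAt ℝ (f x) t)
    (hnormal : ∀ x, ‖x‖ = R → ∀ t ∈ Ioo 0 T, normalDeriv R (fun y => f y t) x ≠ 0)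
    (ha : 0 ≤ a) (hb : b < T) : IsRegularOn R a b f := by
  have hsub : Ioc a b ⊆ Ioo 0 T := fun t ht => ⟨ha.trans_lt ht.1, ht.2.trans_lt hb⟩
  refine ⟨hcont.mono (prod_mono_right fun t ht => ⟨ha.trans ht.1, ht.2.trans_lt hb⟩),
    fun x hx t ht => (hspace t (hsub ht)).contDiffAt ?_,
    fun x hx t ht => htime x (mem_closedBall_zero_iff.2 hx.le) t (hsub ht),
    fun x hx t ht => differentiableAt_of_deriv_ne_zero (hnormal x hx t (hsub ht))⟩
  exact mem_of_superset (isOpen_ball.mem_nhds (mem_ball_zero_iff.2 hx)) ball_subset_closedBall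

lemma IsClassicalSolution.expSystem {T lam1 lam2 : ℝ} {u v : 𝔼 n → ℝ → ℝ} {u₀ v₀ : 𝔼 n → ℝ}
    (h : IsClassicalSolution n R T lam1 lam2 u v u₀ v₀) :
    ExpSystem R T (fun i => bif i then lam1 else lam2) (fun i => bif i then u else v) where
  isRegularOn
    | true, _, _, ha, hb => .of_normalDeriv_ne_zero h.cont_u h.reg_space_u h.reg_time_u
        (fun x hx t ht => (h.bc_u x hx t ht).trans_ne (exp_ne_zero _)) ha hb
    | false, _, _, ha, hb => .of_normalDeriv_ne_zero h.cont_v h.reg_space_v h.reg_time_v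
        (fun x hx t ht => (h.bc_v x hx t ht).trans_ne (exp_ne_zero _)) ha hb
  heatOp_eq
    | true, x, hx, t, ht => sub_eq_of_eq_add' (h.pde_u x (mem_ball_zero_iff.2 hx) t ht)
    | false, x, hx, t, ht => sub_eq_of_eq_add' (h.pde_v x (mem_ball_zero_iff.2 hx) t ht)
  normalDeriv_eq
    | true => h.bc_u
    | false => h.bc_v

namespace ExpSystem

variable {T : ℝ} {lam : Bool → ℝ} {w : Bool → 𝔼 n → ℝ → ℝ}

lemma exists_abs_le (h : ExpSystem R T lam w) {b : ℝ} (hb : b < T) :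
    ∃ N, ∀ i x, ‖x‖ ≤ R → ∀ t ∈ Icc 0 b, |w i x t| ≤ N := by
  have hcpt : IsCompact (closedBall (0 : 𝔼 n) R ×ˢ Icc 0 b) :=
    (isCompact_closedBall 0 R).prod isCompact_Icc
  choose N hN using fun i =>
    hcpt.exists_bound_of_continuousOn (h.isRegularOn i 0 b le_rfl hb).continuousOn
  obtain ⟨N', hN'⟩ := (finite_range N).bddAbove
  exact ⟨N', fun i x hx t ht =>
    (hN i (x, t) ⟨mem_closedBall_zero_iff.2 hx, ht⟩).trans (hN' ⟨i, rfl⟩)⟩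

lemma lt_add_mul_boundaryLayer (h : ExpSystem R T lam w) (hR : 0 < R) (hlam : ∀ i, 0 ≤ lam i)
    {Λ : ℝ} (hΛ : ∀ i, lam i ≤ Λ) (hinit : ∀ i x y, ‖x‖ ≤ ‖y‖ → ‖y‖ ≤ R → w i x 0 ≤ w i y 0)
    {b : ℝ} (hb : b < T) {C : ℝ} (hC : 0 < C)
    (hwC : ∀ i x, ‖x‖ ≤ R → ∀ t ∈ Icc 0 b, exp (w i x t) ≤ C)
    {φ : ℝ → ℝ} (hφ : ContDiff ℝ 2 φ) (hφ_pos : ∀ t, 0 < φ t)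
    (hφ_deriv : ∀ t, (4 * C ^ 2 + (2 * n / R + Λ) * C) * φ t < deriv φ t) :
    ∀ i x y, ‖x‖ ≤ ‖y‖ → ‖y‖ ≤ R → ∀ t ∈ Icc 0 b,
      w i x t < w i y t + φ t * boundaryLayer R C y := by
  have hreg : ∀ i, IsRegularOn R 0 b (w i) := fun i => h.isRegularOn i 0 b le_rfl hb
  have hlayer : ∀ t (y : 𝔼 n), 0 < φ t * boundaryLayer R C y := fun t y =>
    mul_pos (hφ_pos t) (boundaryLayer_pos C y)
  have hflux : ∀ i y, ‖y‖ = R → ∀ t ∈ Ioc 0 b,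
      normalDeriv R (fun z => w i z t + φ t * boundaryLayer R C z) y =
        exp (w (!i) y t) + φ t * (2 * C) := fun i y hy t ht => by
    rw [normalDeriv_add_mul_boundaryLayer hR _ _ hy ((hreg i).differentiableAt_normal y hy t ht),
      h.normalDeriv_eq i y hy t ⟨ht.1, ht.2.trans_lt hb⟩]
  refine lt_of_heatOp_lt hR hreg (fun i => (hreg i).add_mul_boundaryLayer hφ C) ?_ ?_ ?_ ?_
  · exact fun i x y hxy hy => (hinit i x y hxy hy).trans_lt (lt_add_of_pos_right _ (hlayer 0 y))
  · intro i x y hxy hy t ht _ hle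
    refine lt_of_lt_of_le ?_ (le_heatOp_add_mul_boundaryLayer hR C hy.le
      ((hreg i).contDiffAt y hy t ht) ((hreg i).differentiableAt_time y hy t ht)
      (hφ.differentiable two_ne_zero t) (hφ_pos t).le)
    have htT : t ∈ Ioo 0 T := ⟨ht.1, ht.2.trans_lt hb⟩
    rw [h.heatOp_eq i x (hxy.trans_lt hy) t htT, h.heatOp_eq i y hy t htT]
    have hreact := mul_exp_le_mul_exp_add_mul (hle (!i)) (hlayer t y).le
      (hwC (!i) x (hxy.trans hy.le) t (Ioc_subset_Icc_self ht)) (hlam i) (hΛ i)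
    linarith [mul_lt_mul_of_pos_right (hφ_deriv t) (boundaryLayer_pos (R := R) C y)]
  · intro i x y hx hy t ht _ hle
    rw [h.normalDeriv_eq i x hx t ⟨ht.1, ht.2.trans_lt hb⟩, hflux i y hy t ht]
    have hxy := exp_le_exp_add_mul (hle (!i)) (hlayer t y).le
      (hwC (!i) x hx.le t (Ioc_subset_Icc_self ht))
    rw [boundaryLayer_of_norm_eq C hy] at hxy
    linarith [mul_pos (hφ_pos t) hC]
  · intro i y hy t ht
    rw [hflux i y hy t ht]
    exact add_pos (exp_pos _) (mul_pos (hφ_pos t) (by linarith))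

lemma le_of_norm_le (h : ExpSystem R T lam w) (hR : 0 < R) (hlam : ∀ i, 0 ≤ lam i)
    (hinit : ∀ i x y, ‖x‖ ≤ ‖y‖ → ‖y‖ ≤ R → w i x 0 ≤ w i y 0) :
    ∀ i x y, ‖x‖ ≤ ‖y‖ → ‖y‖ ≤ R → ∀ t ∈ Ico 0 T, w i x t ≤ w i y t := by
  intro i x y hxy hyR t ht
  obtain ⟨N, hN⟩ := h.exists_abs_le ht.2
  obtain ⟨Λ, hΛ⟩ := (finite_range lam).bddAbove
  refine le_of_forall_pos_lt_add fun δ hδ => ?_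
  set κ := 4 * exp N ^ 2 + (2 * n / R + Λ) * exp N
  have hderiv : ∀ s, deriv (fun s => δ * exp ((κ + 1) * (s - t))) s =
      (κ + 1) * (δ * exp ((κ + 1) * (s - t))) := fun s =>
    (((((hasDerivAt_id s).sub_const t).const_mul (κ + 1)).exp).const_mul δ).deriv.trans
      (by simp only [id]; ring)
  have hlt := h.lt_add_mul_boundaryLayer hR hlam (fun i => hΛ ⟨i, rfl⟩) hinit ht.2 (exp_pos N)
    (fun i x hx s hs => exp_le_exp.2 ((le_abs_self _).trans (hN i x hx s hs)))
    (φ := fun s => δ * exp ((κ + 1) * (s - t))) (by fun_prop) (fun s => by positivity)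
    (fun s => by
      rw [hderiv s]
      exact mul_lt_mul_of_pos_right (lt_add_one κ) (by positivity)) i x y hxy hyR t ⟨ht.1, le_rfl⟩
  calc w i x t < w i y t + δ * exp ((κ + 1) * (t - t)) * boundaryLayer R (exp N) y := hlt
    _ = w i y t + δ * boundaryLayer R (exp N) y := by simp
    _ ≤ w i y t + δ := by
      gcongr
      exact mul_le_of_le_one_right hδ.le (boundaryLayer_le_one hR (exp_pos N).le hyR)

/-- At a contact point `w i x = w (!i) y + K` the partners satisfy `w (!i) x ≤ w i y - K`, so the
larger component has both the weaker source and the weaker flux. -/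
lemma lt_swap_add (h : ExpSystem R T lam w) (hR : 0 < R) (hlam : ∀ i, 0 ≤ lam i)
    (hinit : ∀ i x y, ‖x‖ ≤ ‖y‖ → ‖y‖ ≤ R → w i x 0 ≤ w i y 0) {K : ℝ} (hK : 0 < K)
    (hlamK : ∀ i, lam i * exp (-K) < lam (!i))
    (hinitK : ∀ i x y, ‖x‖ ≤ ‖y‖ → ‖y‖ ≤ R → w i x 0 < w (!i) y 0 + K) :
    ∀ i x y, ‖x‖ ≤ ‖y‖ → ‖y‖ ≤ R → ∀ t ∈ Ico 0 T, w i x t < w (!i) y t + K := by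
  intro i x y hxy hyR t ht
  have hmono := h.le_of_norm_le hR hlam hinit
  have hreg : ∀ i, IsRegularOn R 0 t (w i) := fun i => h.isRegularOn i 0 t le_rfl ht.2
  have hpartner : ∀ i x y, ‖x‖ ≤ ‖y‖ → ‖y‖ ≤ R → ∀ s ∈ Ioc 0 t, w i x s = w (!i) y s + K →
      exp (w (!i) x s) ≤ exp (-K) * exp (w i y s) := by
    intro i x y hxy hyR s hs heq
    have hsT : s ∈ Ico 0 T := ⟨hs.1.le, hs.2.trans_lt ht.2⟩
    rw [← exp_add, exp_le_exp]
    linarith [hmono i x y hxy hyR s hsT, hmono (!i) x y hxy hyR s hsT]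
  have hflux : ∀ i y, ‖y‖ = R → ∀ s ∈ Ioc 0 t,
      normalDeriv R (fun z => w (!i) z s + K) y = exp (w i y s) := fun i y hy s hs => by
    rw [normalDeriv_add_const, h.normalDeriv_eq (!i) y hy s ⟨hs.1, hs.2.trans_lt ht.2⟩,
      Bool.not_not]
  refine lt_of_heatOp_lt hR hreg (g := fun i y s => w (!i) y s + K)
    (fun i => (hreg (!i)).add (.of_contDiff contDiff_const 0 t)) hinitK ?_ ?_ ?_
    i x y hxy hyR t ⟨ht.1, le_rfl⟩
  · intro i x y hxy hyR s hs heq _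
    have hsT : s ∈ Ioo 0 T := ⟨hs.1, hs.2.trans_lt ht.2⟩
    rw [heatOp_add_const, h.heatOp_eq i x (hxy.trans_lt hyR) s hsT, h.heatOp_eq (!i) y hyR s hsT,
      Bool.not_not]
    calc lam i * exp (w (!i) x s) ≤ lam i * (exp (-K) * exp (w i y s)) :=
          mul_le_mul_of_nonneg_left (hpartner i x y hxy hyR.le s hs heq) (hlam i)
      _ = lam i * exp (-K) * exp (w i y s) := (mul_assoc _ _ _).symm
      _ < lam (!i) * exp (w i y s) := mul_lt_mul_of_pos_right (hlamK i) (exp_pos _)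
  · intro i x y hx hy s hs heq _
    rw [hflux i y hy s hs, h.normalDeriv_eq i x hx s ⟨hs.1, hs.2.trans_lt ht.2⟩]
    exact (hpartner i x y (hx.trans hy.symm).le hy.le s hs heq).trans_lt
      (mul_lt_of_lt_one_left (exp_pos _) (exp_lt_one_iff.2 (neg_lt_zero.2 hK)))
  · exact fun i y hy s hs => (exp_pos _).trans_eq (hflux i y hy s hs).symm

lemma exists_lt_swap_add (h : ExpSystem R T lam w) (hR : 0 < R) (hT : 0 < T)
    (hlam : ∀ i, 0 < lam i) (hinit : ∀ i x y, ‖x‖ ≤ ‖y‖ → ‖y‖ ≤ R → w i x 0 ≤ w i y 0) :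
    ∃ K, 0 < K ∧ ∀ i x y, ‖x‖ ≤ ‖y‖ → ‖y‖ ≤ R → ∀ t ∈ Ico 0 T, w i x t < w (!i) y t + K := by
  obtain ⟨N, hN⟩ := h.exists_abs_le hT
  obtain ⟨ρ, hρ⟩ := (finite_range fun i => lam i / lam (!i)).bddAbove
  obtain ⟨K, hK, hKN, hKρ⟩ : ∃ K, 0 < K ∧ 2 * N < K ∧ ρ < exp K :=
    ((eventually_gt_atTop 0).and ((eventually_gt_atTop (2 * N)).and
      (tendsto_exp_atTop.eventually_gt_atTop ρ))).exists
  refine ⟨K, hK, h.lt_swap_add hR (fun i => (hlam i).le) hinit hK (fun i => ?_) ?_⟩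
  · rw [exp_neg, ← div_eq_mul_inv, div_lt_iff₀ (exp_pos K), ← div_lt_iff₀' (hlam _)]
    exact (hρ ⟨i, rfl⟩).trans_lt hKρ
  · intro i x y hxy hyR
    linarith [abs_le.1 (hN i x (hxy.trans hyR) 0 ⟨le_rfl, le_rfl⟩),
      abs_le.1 (hN (!i) y hyR 0 ⟨le_rfl, le_rfl⟩)]

lemma exists_le_add (h : ExpSystem R T lam w) (hR : 0 < R) (hT : 0 < T) (hlam : ∀ i, 0 < lam i)
    (hinit : ∀ i x y, ‖x‖ ≤ ‖y‖ → ‖y‖ ≤ R → w i x 0 ≤ w i y 0) :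
    ∃ K, ∀ i j x y, ‖x‖ ≤ ‖y‖ → ‖y‖ ≤ R → ∀ t ∈ Ico 0 T, w i x t ≤ w j y t + K := by
  obtain ⟨K, hK, hlt⟩ := h.exists_lt_swap_add hR hT hlam hinit
  refine ⟨K, fun i j x y hxy hyR t ht => ?_⟩
  rcases Bool.eq_or_eq_not j i with rfl | rfl
  · exact (h.le_of_norm_le hR (fun i => (hlam i).le) hinit j x y hxy hyR t ht).trans
      (le_add_of_nonneg_right hK.le)
  · exact (hlt i x y hxy hyR t ht).le

/-- The barrier `M + G (s - t₀) + boundaryLayer R E`, where `E = exp (M + 2)` bounds source and flux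
below the level `M + 2`, stays below that level as long as `G (t - t₀) < 1`. -/
lemma lt_add_two_of_le (h : ExpSystem R T lam w) (hR : 0 < R) (hlam : ∀ i, 0 < lam i) {Λ : ℝ}
    (hΛ : ∀ i, lam i ≤ Λ) {M t₀ t : ℝ} (ht₀ : 0 ≤ t₀) (hlt : t₀ ≤ t) (htT : t < T)
    (hM : ∀ i x, ‖x‖ ≤ R → w i x t₀ ≤ M)
    (hrate : (4 * exp (M + 2) ^ 2 + (2 * n / R + Λ) * exp (M + 2)) * (t - t₀) < 1) :
    ∀ i x, ‖x‖ ≤ R → w i x t < M + 2 := by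
  set E := exp (M + 2)
  set G := 4 * E ^ 2 + (2 * n / R + Λ) * E
  set ψ : ℝ → ℝ := fun s => M + G * (s - t₀) with hψ
  have hE : 0 < E := exp_pos _
  have hΛ₀ : 0 < Λ := (hlam true).trans_le (hΛ true)
  have hG₀ : 0 ≤ G := by positivity
  have hbelow : ∀ y : 𝔼 n, ‖y‖ ≤ R → ∀ s ≤ t, ψ s + boundaryLayer R E y < M + 2 :=
    fun y hy s hs => by
      linarith [boundaryLayer_le_one hR hE.le hy, mul_le_mul_of_nonneg_left hs hG₀]
  suffices hcomp : ∀ i x y, ‖x‖ ≤ ‖y‖ → ‖y‖ ≤ R → ∀ s ∈ Icc t₀ t,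
      w i x s < ψ s + boundaryLayer R E y from fun i x hx =>
    (hcomp i x x le_rfl hx t ⟨hlt, le_rfl⟩).trans (hbelow x hx t le_rfl)
  have hexp : ∀ i x y, ‖y‖ ≤ R → ∀ s ∈ Ioc t₀ t, w i x s ≤ ψ s + boundaryLayer R E y →
      exp (w i x s) < E := fun i x y hy s hs hle =>
    exp_lt_exp.2 (hle.trans_lt (hbelow y hy s hs.2))
  refine lt_of_heatOp_lt hR (fun i => h.isRegularOn i t₀ t ht₀ htT)
    (fun _ => isRegularOn_time_add_boundaryLayer (by fun_prop) E t₀ t) ?_ ?_ ?_ ?_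
  · intro i x y hxy hy
    simpa [hψ] using (hM i x (hxy.trans hy)).trans_lt
      (lt_add_of_pos_right _ (boundaryLayer_pos (R := R) E y))
  · intro i x y hxy hy s hs _ hle
    refine lt_of_lt_of_le ?_ (le_heatOp_time_add_boundaryLayer hR hE.le ψ hy.le s)
    have hψ_deriv : deriv ψ s = G := by simp [hψ]
    have hsource : lam i * exp (w (!i) x s) < Λ * E :=
      mul_lt_mul' (hΛ i) (hexp _ x y hy.le s hs (hle _)) (exp_pos _).le hΛ₀
    rw [h.heatOp_eq i x (hxy.trans_lt hy) s ⟨ht₀.trans_lt hs.1, hs.2.trans_lt htT⟩, hψ_deriv]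
    linarith
  · intro i x y hx hy s hs _ hle
    rw [normalDeriv_const_add_boundaryLayer hR _ _ hy,
      h.normalDeriv_eq i x hx s ⟨ht₀.trans_lt hs.1, hs.2.trans_lt htT⟩]
    linarith [hexp (!i) x y hy.le s hs (hle _)]
  · intro i y hy s _
    rw [normalDeriv_const_add_boundaryLayer hR _ _ hy]
    positivity

lemma one_le_rate_mul_of_blowsUpAt (h : ExpSystem R T lam w) (hR : 0 < R) (hlam : ∀ i, 0 < lam i)
    {Λ : ℝ} (hΛ : ∀ i, lam i ≤ Λ) (hblow : BlowsUpAt n R T (w true) (w false)) {M t₀ : ℝ}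
    (ht₀ : t₀ ∈ Ico 0 T) (hM : ∀ i x, ‖x‖ ≤ R → w i x t₀ ≤ M) :
    1 ≤ (4 * exp (M + 2) ^ 2 + (2 * n / R + Λ) * exp (M + 2)) * (T - t₀) := by
  by_contra! hlt
  obtain ⟨t, ⟨x, hx, hsum⟩, ht₀t, htT⟩ :=
    ((hblow (2 * (M + 2))).and_eventually (Ioo_mem_nhdsLT ht₀.2)).exists
  have hΛ₀ : 0 < Λ := (hlam true).trans_le (hΛ true)
  have hrate : (4 * exp (M + 2) ^ 2 + (2 * n / R + Λ) * exp (M + 2)) * (t - t₀) < 1 :=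
    lt_of_le_of_lt (by gcongr) hlt
  have hbound := fun i =>
    h.lt_add_two_of_le hR hlam hΛ ht₀.1 ht₀t.le htT hM hrate i x (mem_closedBall_zero_iff.1 hx)
  linarith [hbound true, hbound false]

theorem exists_le_exp_mul_sqrt (h : ExpSystem R T lam w) (hR : 0 < R) (hT : 0 < T)
    (hlam : ∀ i, 0 < lam i) (hinit : ∀ i x y, ‖x‖ ≤ ‖y‖ → ‖y‖ ≤ R → w i x 0 ≤ w i y 0)
    (hblow : BlowsUpAt n R T (w true) (w false)) :
    ∃ c, 0 < c ∧ ∀ i x, ‖x‖ = R → ∀ t ∈ Ico 0 T, c ≤ exp (w i x t) * √(T - t) := by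
  obtain ⟨K, hK⟩ := h.exists_le_add hR hT hlam hinit
  obtain ⟨Λ, hΛ'⟩ := (finite_range lam).bddAbove
  have hΛ : ∀ i, lam i ≤ Λ := fun i => hΛ' ⟨i, rfl⟩
  have hΛ₀ : 0 < Λ := (hlam true).trans_le (hΛ true)
  refine ⟨exp (-(K + 2)) * (1 + 4 + (2 * n / R + Λ) * √T)⁻¹, by positivity, fun i x hx t ht => ?_⟩
  have hrate := h.one_le_rate_mul_of_blowsUpAt hR hlam hΛ hblow ht
    fun j z hz => hK j i z x (hz.trans_eq hx.symm) hx.le t ht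
  calc exp (-(K + 2)) * (1 + 4 + (2 * n / R + Λ) * √T)⁻¹
      ≤ exp (-(K + 2)) * (exp (w i x t + K + 2) * √(T - t)) := by
        gcongr
        exact inv_le_mul_sqrt_of_one_le (by norm_num) (by positivity) (exp_pos _).le
          (sub_nonneg.2 ht.2.le) (sub_le_self T ht.1) hrate
    _ = exp (w i x t) * √(T - t) := by
        rw [← mul_assoc, ← exp_add]
        ring_nf

end ExpSystem

end Ball

lemma log_sub_half_mul_log_le {c a τ : ℝ} (hc : 0 < c) (hτ : 0 < τ) (h : c ≤ exp a * √τ) :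
    log c - 1 / 2 * log τ ≤ a := by
  have hlog := log_le_log hc h
  rw [log_mul (exp_ne_zero a) (sqrt_ne_zero'.2 hτ), log_exp, log_sqrt hτ.le] at hlog
  linarith

theorem lower_blowup_rate_general {n : ℕ} {R T lam1 lam2 : ℝ}
    (hR : 0 < R) (hT : 0 < T) (hlam1 : 0 < lam1) (hlam2 : 0 < lam2)
    {u v : EuclideanSpace ℝ (Fin n) → ℝ → ℝ} {u₀ v₀ : EuclideanSpace ℝ (Fin n) → ℝ}
    (hu₀ : ∀ x ∈ closedBall (0 : EuclideanSpace ℝ (Fin n)) R,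
      ∀ y ∈ closedBall (0 : EuclideanSpace ℝ (Fin n)) R, ‖x‖ ≤ ‖y‖ → u₀ x ≤ u₀ y)
    (hv₀ : ∀ x ∈ closedBall (0 : EuclideanSpace ℝ (Fin n)) R,
      ∀ y ∈ closedBall (0 : EuclideanSpace ℝ (Fin n)) R, ‖x‖ ≤ ‖y‖ → v₀ x ≤ v₀ y)
    (hsol : IsClassicalSolution n R T lam1 lam2 u v u₀ v₀) (hblow : BlowsUpAt n R T u v) :
    ∃ c : ℝ, 0 < c ∧ ∀ t ∈ Ioo (0 : ℝ) T, ∀ x : EuclideanSpace ℝ (Fin n), ‖x‖ = R →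
      Real.log c - (1 / 2) * Real.log (T - t) ≤ u x t ∧
      Real.log c - (1 / 2) * Real.log (T - t) ≤ v x t := by
  have hinit : ∀ i x y, ‖x‖ ≤ ‖y‖ → ‖y‖ ≤ R → (bif i then u else v) x 0 ≤ (bif i then u else v) y 0
  | true, x, y, hxy, hy => by
    have hx := mem_closedBall_zero_iff.2 (hxy.trans hy)
    have hy := mem_closedBall_zero_iff.2 hy
    simpa [hsol.init_u x hx, hsol.init_u y hy] using hu₀ x hx y hy hxy
  | false, x, y, hxy, hy => by
    have hx := mem_closedBall_zero_iff.2 (hxy.trans hy)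
    have hy := mem_closedBall_zero_iff.2 hy
    simpa [hsol.init_v x hx, hsol.init_v y hy] using hv₀ x hx y hy hxy
  obtain ⟨c, hc, hbound⟩ := hsol.expSystem.exists_le_exp_mul_sqrt hR hT
    (Bool.forall_bool.2 ⟨hlam2, hlam1⟩) hinit hblow
  exact ⟨c, hc, fun t ht x hx =>
    ⟨log_sub_half_mul_log_le hc (sub_pos.2 ht.2) (hbound true x hx t (Ioo_subset_Ico_self ht)),
      log_sub_half_mul_log_le hc (sub_pos.2 ht.2) (hbound false x hx t (Ioo_subset_Ico_self ht))⟩⟩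

/-- Theorem 3.1 (lower blow-up rate): let `λ₁ = λ₂ = λ > 0` and let `(u,v)` be a classical
solution of problem (1.1) blowing up at time `T < ∞`.  If the initial data satisfy
`u₀'(r) − (r/R) e^{v₀(r)} ≥ 0` and `v₀'(r) − (r/R) e^{u₀(r)} ≥ 0` on `[0,R]` (expressed
along each unit direction `e`), then there is `c > 0` with
`u(R,t) ≥ log c − (1/2) log(T−t)` and `v(R,t) ≥ log c − (1/2) log(T−t)` for `t ∈ (0,T)`. -/
theorem lower_blowup_rate {n : ℕ} (hn : 1 ≤ n) {R T lam : ℝ}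
    (hR : 0 < R) (hT : 0 < T) (hlam : 0 < lam)
    {u v : EuclideanSpace ℝ (Fin n) → ℝ → ℝ} {u₀ v₀ : EuclideanSpace ℝ (Fin n) → ℝ}
    (hdata : AdmissibleData n R u₀ v₀)
    (hsol : IsClassicalSolution n R T lam lam u v u₀ v₀)
    (hblow : BlowsUpAt n R T u v)
    (hinit_u : ∀ e : EuclideanSpace ℝ (Fin n), ‖e‖ = 1 → ∀ r ∈ Icc (0 : ℝ) R,
      0 ≤ derivWithin (fun ρ : ℝ => u₀ (ρ • e)) (Icc 0 R) r - (r / R) * Real.exp (v₀ (r • e)))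
    (hinit_v : ∀ e : EuclideanSpace ℝ (Fin n), ‖e‖ = 1 → ∀ r ∈ Icc (0 : ℝ) R,
      0 ≤ derivWithin (fun ρ : ℝ => v₀ (ρ • e)) (Icc 0 R) r - (r / R) * Real.exp (u₀ (r • e))) :
    ∃ c : ℝ, 0 < c ∧ ∀ t ∈ Ioo (0 : ℝ) T, ∀ x : EuclideanSpace ℝ (Fin n), ‖x‖ = R →
      Real.log c - (1 / 2) * Real.log (T - t) ≤ u x t ∧
      Real.log c - (1 / 2) * Real.log (T - t) ≤ v x t :=
  lower_blowup_rate_general hR hT hlam hlam hdata.u0_radial_mono hdata.v0_radial_mono hsol hblow
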